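/- Let W ⊆ ⟦𝕐⟧ be such that dim_H(⟦𝕐⟧ \ W) < 1/2. Then Player I has a winning pure strategy in the binary Gale–Stewart game with target set W; in particular, the game with target set W is determined. -/

import Mathlib

open Metric Set Filter MeasureTheory

noncomputable local instance : MetricSpace (ℕ → Bool) := PiNat.metricSpace

/-- The finite prefix `⟨x 0, …, x (n-1)⟩` of a play. -/
def prefixList (x : ℕ → Bool) (n : ℕ) : List Bool := List.ofFn fun i : Fin n => x i

/-- `x` is a play consistent with the Player I pure strategy `sI`. -/
def ConsistentI (sI : List Bool → Bool) (x : ℕ → Bool) : Prop :=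
  ∀ n : ℕ, Even n → x n = sI (prefixList x n)

/-- `x` is a play consistent with the Player II pure strategy `sII`. -/
def ConsistentII (sII : List Bool → Bool) (x : ℕ → Bool) : Prop :=
  ∀ n : ℕ, Odd n → x n = sII (prefixList x n)

/-!
Player I picks a measure `μ` on the space of plays and always moves into the half of the current
cylinder of smaller `μ`-measure. After `n` moves, `⌈n / 2⌉` of which are his (`(n + 1) / 2` in
natural number division), the position has measure at most `2 ^ (-⌈n / 2⌉) * μ univ`. Since the
complement of `W` is `μH[1 / 2]`-small, it is covered by cylinders of lengths `l i` with
`∑ i, 2 ^ (-⌈l i / 2⌉) < 1`. Putting an atom of mass `2 ^ (-⌈l i / 2⌉)` into the `i`-th cylinder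
gives `μ univ < 1`, and then the measure of each of these cylinders is too large for the play to
enter it.
-/

open PiNat
open scoped ENNReal

theorem exists_lt_tsum_lt {ι : Type*} [Countable ι] {u : ι → ℝ≥0∞} {C : ℝ≥0∞}
    (hu : ∑' i, u i < C) : ∃ w : ι → ℝ≥0∞, (∀ i, u i < w i) ∧ ∑' i, w i < C := by
  obtain ⟨δ, hδ, hsum⟩ := ENNReal.lt_iff_exists_add_pos_lt.1 hu
  obtain ⟨ε, hε, hε_sum⟩ :=
    ENNReal.exists_pos_sum_of_countable' (ENNReal.coe_ne_zero.2 hδ.ne') ι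
  have hu_ne_top (i : ι) : u i ≠ ∞ := ((ENNReal.le_tsum i).trans_lt hu).ne_top
  refine ⟨fun i => u i + ε i, fun i => ENNReal.lt_add_right (hu_ne_top i) (hε i).ne', ?_⟩
  calc ∑' i, (u i + ε i) = ∑' i, u i + ∑' i, ε i := ENNReal.tsum_add
    _ ≤ ∑' i, u i + δ := by gcongr
    _ < C := hsum

theorem exists_cover_of_hausdorffMeasure_lt {X : Type*} [EMetricSpace X] [MeasurableSpace X]
    [BorelSpace X] {d : ℝ} (hd : 0 < d) {s : Set X} {C : ℝ≥0∞} (hs : μH[d] s < C) :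
    ∃ (t : ℕ → Set X) (w : ℕ → ℝ≥0∞),
      s ⊆ ⋃ n, t n ∧ (∀ n, ediam (t n) ^ d < w n) ∧ ∑' n, w n < C := by
  rw [Measure.hausdorffMeasure_apply] at hs
  have h_lt := (le_iSup₂ (1 : ℝ≥0∞) one_pos).trans_lt hs
  simp only [iInf_lt_iff] at h_lt
  obtain ⟨t, hst, -, hsum⟩ := h_lt
  have hsum_eq (n : ℕ) : ⨆ _ : (t n).Nonempty, ediam (t n) ^ d = ediam (t n) ^ d := by
    obtain h | h := (t n).eq_empty_or_nonempty <;> simp [h, hd]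
  simp only [hsum_eq] at hsum
  obtain ⟨w, hw, hw_sum⟩ := exists_lt_tsum_lt hsum
  exact ⟨t, w, hst, hw, hw_sum⟩

section Cylinders

attribute [local instance] PiNat.metricSpace

variable {E : ℕ → Type*} [∀ n, TopologicalSpace (E n)] [∀ n, DiscreteTopology (E n)]

theorem apply_eq_of_edist_lt {x y : ∀ n, E n} {n : ℕ} (h : edist x y < 2⁻¹ ^ n) : x n = y n := by
  refine apply_eq_of_dist_lt ?_ le_rfl
  rw [edist_dist, ENNReal.ofReal_lt_iff_lt_toReal dist_nonneg (by simp)] at h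
  simpa using h

theorem exists_subset_cylinder_of_ediam_lt [Nonempty (∀ n, E n)] {t : Set (∀ n, E n)} {a : ℝ≥0∞}
    (ht : ediam t < a) : ∃ (c : ∀ n, E n) (l : ℕ), t ⊆ cylinder c l ∧ 2⁻¹ ^ l ≤ a := by
  classical
  have h_exists : ∃ l : ℕ, (2⁻¹ : ℝ≥0∞) ^ l ≤ a :=
    (ENNReal.exists_inv_two_pow_lt (pos_of_gt ht).ne').imp fun _ => le_of_lt
  obtain rfl | ⟨c, hc⟩ := t.eq_empty_or_nonempty
  · exact ⟨Classical.arbitrary _, Nat.find h_exists, empty_subset _, Nat.find_spec h_exists⟩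
  refine ⟨c, Nat.find h_exists, fun x hx i hi => apply_eq_of_edist_lt ?_, Nat.find_spec h_exists⟩
  calc edist x c ≤ ediam t := edist_le_ediam_of_mem hx hc
    _ < a := ht
    _ < 2⁻¹ ^ i := not_le.1 (Nat.find_min h_exists hi)

theorem exists_subset_cylinder_of_sqrt_ediam_lt [Nonempty (∀ n, E n)] {t : Set (∀ n, E n)}
    {a : ℝ≥0∞} (ht : ediam t ^ (1 / 2 : ℝ) < a) :
    ∃ (c : ∀ n, E n) (l : ℕ), t ⊆ cylinder c l ∧ 2⁻¹ ^ ((l + 1) / 2) ≤ a := by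
  have ht_sq : ediam t < a ^ 2 := by
    rw [one_div, ENNReal.rpow_inv_lt_iff two_pos] at ht
    exact_mod_cast ht
  obtain ⟨c, l, htc, hl⟩ := exists_subset_cylinder_of_ediam_lt ht_sq
  refine ⟨c, l, htc, (ENNReal.pow_le_pow_left_iff two_ne_zero).1 ?_⟩
  calc ((2⁻¹ : ℝ≥0∞) ^ ((l + 1) / 2)) ^ 2 = 2⁻¹ ^ ((l + 1) / 2 * 2) := (pow_mul _ _ _).symm
    _ ≤ 2⁻¹ ^ l := pow_le_pow_right_of_le_one' (by simp) (by lia)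
    _ ≤ a ^ 2 := hl

end Cylinders

/-- The set of plays that pass through the position `p`, that is, that extend the finite
sequence `p`. -/
def playsThrough (p : List Bool) : Set (ℕ → Bool) :=
  {y | prefixList y p.length = p}

theorem length_prefixList (x : ℕ → Bool) (n : ℕ) : (prefixList x n).length = n :=
  List.length_ofFn

theorem prefixList_succ (x : ℕ → Bool) (n : ℕ) :
    prefixList x (n + 1) = prefixList x n ++ [x n] := by
  simp only [prefixList, List.ofFn_succ_last, Fin.val_castSucc, Fin.val_last]

theorem playsThrough_prefixList (x : ℕ → Bool) (n : ℕ) :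
    playsThrough (prefixList x n) = cylinder x n := by
  ext y
  simp [playsThrough, prefixList, funext_iff, Fin.forall_iff]

theorem playsThrough_append_singleton (p : List Bool) (b : Bool) :
    playsThrough (p ++ [b]) = playsThrough p ∩ {y | y p.length = b} := by
  ext y
  simp [playsThrough, prefixList_succ, List.append_eq_append_iff_of_size_eq_left,
    length_prefixList]

section HalvingStrategy

variable (μ : Measure (ℕ → Bool))

theorem measure_playsThrough_append_add (p : List Bool) :
    μ (playsThrough (p ++ [true])) + μ (playsThrough (p ++ [false])) = μ (playsThrough p) := by
  have h_meas : MeasurableSet {y : ℕ → Bool | y p.length = true} :=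
    measurableSet_eq_fun (measurable_pi_apply p.length) measurable_const
  have h_compl : {y : ℕ → Bool | y p.length = false} = {y | y p.length = true}ᶜ := by
    ext y
    simp
  rw [playsThrough_append_singleton, playsThrough_append_singleton, h_compl, ← sdiff_eq,
    measure_inter_add_sdiff _ h_meas]

theorem exists_two_mul_measure_playsThrough_append_le (p : List Bool) :
    ∃ b, 2 * μ (playsThrough (p ++ [b])) ≤ μ (playsThrough p) := by
  simp only [← measure_playsThrough_append_add μ p, two_mul]
  obtain h | h := le_total (μ (playsThrough (p ++ [true]))) (μ (playsThrough (p ++ [false])))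
  · exact ⟨true, by gcongr⟩
  · exact ⟨false, by gcongr⟩

theorem exists_strategy_two_pow_mul_measure_cylinder_le :
    ∃ sI : List Bool → Bool, ∀ x, ConsistentI sI x → ∀ n,
      2 ^ ((n + 1) / 2) * μ (cylinder x n) ≤ μ univ := by
  choose sI hsI using exists_two_mul_measure_playsThrough_append_le μ
  refine ⟨sI, fun x hx n => ?_⟩
  induction n with
  | zero => simp
  | succ n ih =>
    refine le_trans ?_ ih
    obtain hn | hn := n.even_or_odd
    · have h_halved : 2 * μ (cylinder x (n + 1)) ≤ μ (cylinder x n) := by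
        have h := hsI (prefixList x n)
        rwa [← hx n hn, ← prefixList_succ, playsThrough_prefixList, playsThrough_prefixList] at h
      rw [show (n + 1 + 1) / 2 = (n + 1) / 2 + 1 by grind, pow_succ, mul_assoc]
      gcongr
    · rw [show (n + 1 + 1) / 2 = (n + 1) / 2 by grind]
      gcongr
      exact cylinder_anti x n.le_succ

end HalvingStrategy

theorem exists_strategy_forall_notMem_cylinder {ι : Type*} (c : ι → ℕ → Bool) (l : ι → ℕ)
    (hl : ∑' i, (2⁻¹ : ℝ≥0∞) ^ ((l i + 1) / 2) < 1) :
    ∃ sI : List Bool → Bool, ∀ x, ConsistentI sI x → ∀ i, x ∉ cylinder (c i) (l i) := by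
  let weight (i : ι) : ℝ≥0∞ := 2⁻¹ ^ ((l i + 1) / 2)
  let μ : Measure (ℕ → Bool) := Measure.sum fun i => weight i • Measure.dirac (c i)
  have hμ_univ : μ univ < 1 := by simpa [μ, weight] using hl
  obtain ⟨sI, hsI⟩ := exists_strategy_two_pow_mul_measure_cylinder_le μ
  refine ⟨sI, fun x hx i hxi => ((hsI x hx (l i)).trans_lt hμ_univ).not_ge ?_⟩
  have h_center : c i ∈ cylinder x (l i) := (mem_cylinder_comm _ _ _).1 hxi
  have h_weight : weight i ≤ μ (cylinder x (l i)) := by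
    simpa [h_center] using Measure.le_sum (fun i => weight i • Measure.dirac (c i)) i
      (cylinder x (l i))
  calc (1 : ℝ≥0∞) = 2 ^ ((l i + 1) / 2) * weight i := by
        rw [← mul_pow, ENNReal.mul_inv_cancel two_ne_zero ENNReal.ofNat_ne_top, one_pow]
    _ ≤ 2 ^ ((l i + 1) / 2) * μ (cylinder x (l i)) := by gcongr

theorem playerI_wins_of_dimH_compl_lt_half_general (W : Set (ℕ → Bool))
    (hW : μH[1 / 2] Wᶜ < 1) :
    ∃ sI : List Bool → Bool, ∀ x : ℕ → Bool, ConsistentI sI x → x ∈ W := by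
  obtain ⟨t, w, hcover, hdiam, hsum⟩ := exists_cover_of_hausdorffMeasure_lt one_half_pos hW
  choose c l htc hl using fun n => exists_subset_cylinder_of_sqrt_ediam_lt (hdiam n)
  obtain ⟨sI, hsI⟩ :=
    exists_strategy_forall_notMem_cylinder c l ((ENNReal.tsum_le_tsum hl).trans_lt hsum)
  refine ⟨sI, fun x hx => by_contra fun hxW => ?_⟩
  obtain ⟨n, hn⟩ := mem_iUnion.1 (hcover hxW)
  exact hsI x hx n (htc n hn)

/-- If `dim_H(⟦𝕐⟧ \ W) < 1/2` then Player I has a winning pure strategy in the binary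
Gale–Stewart game with target set `W`; in particular the game is determined. -/
theorem playerI_wins_of_dimH_compl_lt_half (W : Set (ℕ → Bool)) (hW : dimH Wᶜ < 1 / 2) :
    (∃ sI : List Bool → Bool, ∀ x : ℕ → Bool, ConsistentI sI x → x ∈ W) ∧
    ((∃ sI : List Bool → Bool, ∀ x : ℕ → Bool, ConsistentI sI x → x ∈ W) ∨
      (∃ sII : List Bool → Bool, ∀ x : ℕ → Bool, ConsistentII sII x → x ∉ W)) := by
  have hμ : μH[1 / 2] Wᶜ = 0 := by
    simpa using hausdorffMeasure_of_dimH_lt (d := 1 / 2) (by simpa using hW)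
  have h := playerI_wins_of_dimH_compl_lt_half_general W (hμ.trans_lt one_pos)
  exact ⟨h, Or.inl h⟩
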